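/- Satisfiability of quantifier-free formulas of the string-constraint theory T_{RE,ln} is decidable: there exists a computable function f from (Gödel encodings of) such formulas, with their regular-membership atoms presented by DFAs, to Bool such that f(φ) = true if and only if φ has a satisfying assignment (strings in {0,1}^* for string variables and natural numbers for integer variables). (The paper moreover shows the problem lies in EXPSPACE.) -/

import Mathlib

/-- A DFA over the alphabet `{0,1}`, presented as finite data: states are numbers and the
transition table maps the index `2 * q + b` to the next state. -/
structure RawDFA2 where
  states : ℕ
  trans : List ℕ
  start : ℕ
  accept : List ℕ

/-- The (deterministic) transition function of the DFA. -/
def RawDFA2.step (D : RawDFA2) (q : ℕ) (b : Bool) : ℕ := D.trans.getD (2 * q + b.toNat) 0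

/-- The state reached on reading a word. -/
def RawDFA2.run (D : RawDFA2) (w : List Bool) : ℕ := w.foldl D.step D.start

/-- The DFA accepts a bit string. -/
def RawDFA2.Accepts (D : RawDFA2) (w : List Bool) : Prop := D.run w ∈ D.accept

/-- The natural number denoted by a bit string in most-significant-digit-first notation. -/
def strVal (s : List Bool) : ℕ := s.foldl (fun acc b => 2 * acc + b.toNat) 0

/-- Quantifier-free formulas of the string-constraint theory `T_{RE,ln}`, over string
variables (indexed by `ℕ`, ranging over `{0,1}^*`) and integer variables (indexed by `ℕ`,
ranging over `ℕ`): regular membership `R(s)` with `R` presented by a DFA, equalities and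
disequalities of string variables, length atoms `len(s) = x`, value atoms `strnum(s) = x`,
linear constraints `a₁·x₀ + ⋯ + a_l·x_{l-1} ≥ b`, and conjunctions and disjunctions. -/
inductive TFml where
  | reg : RawDFA2 → ℕ → TFml
  | eq : ℕ → ℕ → TFml
  | ne : ℕ → ℕ → TFml
  | len : ℕ → ℕ → TFml
  | num : ℕ → ℕ → TFml
  | lin : List ℤ → ℤ → TFml
  | and : TFml → TFml → TFml
  | or : TFml → TFml → TFml

/-- Satisfaction under an assignment `I : ℕ → List Bool` of strings to the string variables
and an assignment `ν : ℕ → ℕ` of naturals to the integer variables. -/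
def TFml.Sat (I : ℕ → List Bool) (ν : ℕ → ℕ) : TFml → Prop
  | .reg D s => D.Accepts (I s)
  | .eq s t => I s = I t
  | .ne s t => I s ≠ I t
  | .len s x => (I s).length = ν x
  | .num s x => strVal (I s) = ν x
  | .lin c b => b ≤ ∑ i ∈ Finset.range c.length, c.getD i 0 * (ν i : ℤ)
  | .and φ ψ => φ.Sat I ν ∧ ψ.Sat I ν
  | .or φ ψ => φ.Sat I ν ∨ ψ.Sat I ν

/-- Gödel encoding of a DFA. -/
def RawDFA2.enc (D : RawDFA2) : ℕ :=
  Encodable.encode (D.states, D.trans, D.start, D.accept)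

/-- Gödel encoding of formulas. -/
def TFml.enc : TFml → ℕ
  | .reg D s => Nat.pair 0 (Nat.pair D.enc s)
  | .eq s t => Nat.pair 1 (Nat.pair s t)
  | .ne s t => Nat.pair 2 (Nat.pair s t)
  | .len s x => Nat.pair 3 (Nat.pair s x)
  | .num s x => Nat.pair 4 (Nat.pair s x)
  | .lin c b => Nat.pair 5 (Encodable.encode (c, b))
  | .and φ ψ => Nat.pair 6 (Nat.pair φ.enc ψ.enc)
  | .or φ ψ => Nat.pair 7 (Nat.pair φ.enc ψ.enc)


/-! ### Values of tracks, finite-state functions -/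

/-- Least-significant-first value of a natural-number-weighted track. -/
def nval {α : Type} (f : α → ℕ) : List α → ℕ
  | [] => 0
  | a :: u => f a + 2 * nval f u

/-- Least-significant-first value of an integer-weighted track. -/
def zval {α : Type} (f : α → ℤ) : List α → ℤ
  | [] => 0
  | a :: u => f a + 2 * zval f u

section vals
variable {α : Type}

theorem nval_append (f : α → ℕ) (u v : List α) :
    nval f (u ++ v) = nval f u + 2 ^ u.length * nval f v := by
  induction u with
  | nil => simp [nval]
  | cons a u ih => simp only [List.cons_append, nval, ih, List.length_cons]; ring

theorem zval_append (f : α → ℤ) (u v : List α) :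
    zval f (u ++ v) = zval f u + 2 ^ u.length * zval f v := by
  induction u with
  | nil => simp [zval]
  | cons a u ih => simp only [List.cons_append, zval, ih, List.length_cons]; ring

theorem nval_lt (f : α → ℕ) (hf : ∀ a, f a ≤ 1) (u : List α) : nval f u < 2 ^ u.length := by
  induction u with
  | nil => simp [nval]
  | cons a u ih =>
    have := hf a
    simp only [nval, List.length_cons, pow_succ]; omega

theorem nval_eq_zero (f : α → ℕ) (u : List α) : nval f u = 0 ↔ ∀ a ∈ u, f a = 0 := by
  induction u with
  | nil => simp [nval]
  | cons a u ih => simp [nval, ih]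

theorem zval_cast (f : α → ℕ) (u : List α) : zval (fun a => (f a : ℤ)) u = nval f u := by
  induction u with
  | nil => simp [nval, zval]
  | cons a u ih => simp [nval, zval, ih]

theorem zval_add (f g : α → ℤ) (u : List α) :
    zval (fun a => f a + g a) u = zval f u + zval g u := by
  induction u with
  | nil => simp [zval]
  | cons a u ih => simp only [zval, ih]; ring

theorem zval_sub (f g : α → ℤ) (u : List α) :
    zval (fun a => f a - g a) u = zval f u - zval g u := by
  induction u with
  | nil => simp [zval]
  | cons a u ih => simp only [zval, ih]; ring

theorem zval_mul (c : ℤ) (g : α → ℤ) (u : List α) :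
    zval (fun a => c * g a) u = c * zval g u := by
  induction u with
  | nil => simp [zval]
  | cons a u ih => simp only [zval, ih]; ring

theorem zval_sum (n : ℕ) (g : ℕ → α → ℤ) (u : List α) :
    zval (fun a => ∑ i ∈ Finset.range n, g i a) u = ∑ i ∈ Finset.range n, zval (g i) u := by
  induction u with
  | nil => simp [zval]
  | cons a u ih => simp only [zval, ih, Finset.sum_add_distrib, Finset.mul_sum]

theorem zval_one (u : List α) : zval (fun _ => 1) u = 2 ^ u.length - 1 := by
  induction u with
  | nil => simp [zval]
  | cons a u ih => simp only [zval, ih, List.length_cons]; ring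

/-- `g` is computed by a Moore machine with at most `m` states. -/
def FS {β : Type} (m : ℕ) (g : List α → β) : Prop :=
  ∃ (Q : Type) (_ : Fintype Q) (δ : Q → α → Q) (q0 : Q) (out : Q → β),
    Fintype.card Q ≤ m ∧ ∀ u, g u = out (u.foldl δ q0)

theorem FS.mk' {β Q : Type} [Fintype Q] {m : ℕ} {g : List α → β} (h : List α → Q)
    (δ : Q → α → Q) (out : Q → β) (hc : Fintype.card Q ≤ m)
    (hs : ∀ u a, h (u ++ [a]) = δ (h u) a) (hg : ∀ u, g u = out (h u)) : FS m g := by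
  refine ⟨Q, inferInstance, δ, h [], out, hc, fun u => ?_⟩
  rw [hg]; congr 1
  induction u using List.reverseRecOn with
  | nil => rfl
  | append_singleton u a ih => rw [hs, ih, List.foldl_append]; rfl

theorem FS.comp {β γ : Type} {m : ℕ} {g : List α → β} (h : FS m g) (k : β → γ) :
    FS m (fun u => k (g u)) := by
  obtain ⟨Q, i, δ, q0, out, hc, hg⟩ := h
  exact ⟨Q, i, δ, q0, fun q => k (out q), hc, fun u => congrArg k (hg u)⟩

theorem FS.mono {β : Type} {m m' : ℕ} {g : List α → β} (h : FS m g) (hm : m ≤ m') :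
    FS m' g := by
  obtain ⟨Q, i, δ, q0, out, hc, hg⟩ := h
  exact ⟨Q, i, δ, q0, out, hc.trans hm, hg⟩

theorem FS.pair {β γ : Type} {m m' : ℕ} {g : List α → β} {g' : List α → γ}
    (h : FS m g) (h' : FS m' g') : FS (m * m') (fun u => (g u, g' u)) := by
  obtain ⟨Q, i, δ, q0, out, hc, hg⟩ := h
  obtain ⟨Q', i', δ', q0', out', hc', hg'⟩ := h'
  refine FS.mk' (Q := Q × Q') (fun u => (u.foldl δ q0, u.foldl δ' q0'))
    (fun q a => (δ q.1 a, δ' q.2 a)) (fun q => (out q.1, out' q.2)) ?_ ?_ ?_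
  · rw [Fintype.card_prod]; exact Nat.mul_le_mul hc hc'
  · intro u a; simp
  · intro u; simp [hg, hg']

theorem FS.and {m m' : ℕ} {p p' : List α → Prop}
    (h : FS m p) (h' : FS m' p') : FS (m * m') (fun u => p u ∧ p' u) :=
  (h.pair h').comp (fun x => x.1 ∧ x.2)

theorem FS.or {m m' : ℕ} {p p' : List α → Prop}
    (h : FS m p) (h' : FS m' p') : FS (m * m') (fun u => p u ∨ p' u) :=
  (h.pair h').comp (fun x => x.1 ∨ x.2)

theorem FS_ge (f : α → ℤ) (b : ℤ) (A m : ℕ) (hf : ∀ a, |f a| ≤ A)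
    (hm : 2 * (A + b.natAbs) + 1 ≤ m) : FS m (fun u => b ≤ zval f u) := by
  set C : ℤ := A + b.natAbs with hC
  have key : ∀ u : List α, -C ≤ (zval f u - b) / 2 ^ u.length ∧
      (zval f u - b) / 2 ^ u.length ≤ C := by
    intro u
    induction u using List.reverseRecOn with
    | nil => simp [zval]; omega
    | append_singleton u a ih =>
      have e : (zval f (u ++ [a]) - b) / 2 ^ (u ++ [a]).length
          = ((zval f u - b) / 2 ^ u.length + f a) / 2 := by
        rw [zval_append]
        simp only [zval, List.length_append, List.length_cons, List.length_nil, pow_succ]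
        rw [show zval f u + 2 ^ u.length * (f a + 2 * 0) - b
          = (zval f u - b) + f a * 2 ^ u.length by ring]
        rw [← Int.ediv_ediv_of_nonneg (by positivity), Int.add_mul_ediv_right _ _ (by positivity)]
      rw [e]
      have := abs_le.1 (hf a)
      omega
  refine FS.mk' (Q := {x : ℤ // x ∈ Finset.Icc (-C) C})
    (fun u => ⟨(zval f u - b) / 2 ^ u.length, Finset.mem_Icc.2 (key u)⟩)
    (fun q a => ⟨(q.1 + f a) / 2, ?_⟩) (fun q => 0 ≤ q.1) ?_ ?_ ?_
  · have := abs_le.1 (hf a)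
    have := Finset.mem_Icc.1 q.2
    rw [Finset.mem_Icc]
    omega
  · rw [Fintype.card_coe, Int.card_Icc]; omega
  · intro u a
    apply Subtype.ext
    simp only
    rw [zval_append]
    simp only [zval, List.length_append, List.length_cons, List.length_nil, pow_succ]
    rw [show zval f u + 2 ^ u.length * (f a + 2 * 0) - b
      = (zval f u - b) + f a * 2 ^ u.length by ring]
    rw [← Int.ediv_ediv_of_nonneg (by positivity), Int.add_mul_ediv_right _ _ (by positivity)]
  · intro u
    simp only [eq_iff_iff]
    rw [Int.le_ediv_iff_mul_le (by positivity)]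
    omega

theorem FS_eq (f : α → ℤ) (b : ℤ) (A m : ℕ) (hf : ∀ a, |f a| ≤ A)
    (hm : 2 * (A + b.natAbs) + 1 ≤ m) : FS (m * m) (fun u => zval f u = b) := by
  have h1 := FS_ge f b A m hf hm
  have h2 := FS_ge (fun a => (-1) * f a) (-b) A m (by simpa using hf) (by simpa using hm)
  have := h1.and h2
  refine (congrArg (FS (m * m)) ?_).mp this
  funext u
  rw [zval_mul]
  apply propext
  omega

theorem FS_mod (f : α → ℕ) (P : ℕ) [NeZero P] :
    FS (P * (P * P)) (fun u => ((nval f u : ZMod P), (u.length : ZMod P))) := by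
  refine FS.mk' (Q := ZMod P × (ZMod P × ZMod P))
    (fun u => ((nval f u : ZMod P), (2 : ZMod P) ^ u.length, (u.length : ZMod P)))
    (fun q a => (q.1 + q.2.1 * (f a : ZMod P), q.2.1 * 2, q.2.2 + 1))
    (fun q => (q.1, q.2.2)) ?_ ?_ ?_
  · simp [ZMod.card]
  · intro u a
    simp [nval_append, nval, pow_succ]
  · intro u; rfl

/-! ### Pumping -/

theorem iterate_periodic {β : Type} [Fintype β] (f : β → β) (N : ℕ) (hN : Fintype.card β ≤ N)
    (b : β) (n k : ℕ) (hn : N ≤ n) : f^[n + k * N.factorial] b = f^[n] b := by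
  obtain ⟨i, j, hij, he⟩ : ∃ i j : Fin (N + 1), i < j ∧ f^[i] b = f^[j] b := by
    obtain ⟨i, j, hne, he⟩ := Fintype.exists_ne_map_eq_of_card_lt
      (fun i : Fin (N + 1) => f^[i] b) (by simpa using Nat.lt_succ_of_le hN)
    rcases lt_or_gt_of_ne hne with h | h
    · exact ⟨i, j, h, he⟩
    · exact ⟨j, i, h, he.symm⟩
  have hlt : (i : ℕ) < j := hij
  have hd : ∀ n, (i : ℕ) ≤ n → f^[n + (j - i)] b = f^[n] b := by
    intro n hn
    obtain ⟨r, rfl⟩ := Nat.exists_eq_add_of_le hn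
    rw [show (i : ℕ) + r + (j - i) = r + j by omega, show (i : ℕ) + r = r + i by omega,
      Function.iterate_add_apply, Function.iterate_add_apply, he]
  have hm : ∀ m n, (i : ℕ) ≤ n → f^[n + m * (j - i)] b = f^[n] b := by
    intro m
    induction m with
    | zero => simp
    | succ m ih =>
      intro n hn
      rw [Nat.succ_mul, ← add_assoc, hd _ (by omega), ih n hn]
  obtain ⟨c, hc⟩ := Nat.dvd_factorial (show 0 < (j : ℕ) - i by omega)
    (show (j : ℕ) - i ≤ N by omega)
  rw [hc, show k * ((j - i) * c) = (k * c) * ((j : ℕ) - i) by ring]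
  exact hm _ _ (by omega)

/-- Reachability by a word of exactly `n` letters from the class `C`. -/
def Rch {Q : Type} (δ : Q → α → Q) (C : α → Prop) (n : ℕ) (s t : Q) : Prop :=
  ∃ v : List α, v.length = n ∧ (∀ a ∈ v, C a) ∧ v.foldl δ s = t

theorem Rch_pump {Q : Type} [Fintype Q] (δ : Q → α → Q) (C : α → Prop) (M : ℕ)
    (hM : Fintype.card Q ≤ M) (n n' : ℕ) (s t : Q) (hn : 2 ^ M ≤ n) (hn' : 2 ^ M ≤ n')
    (hmod : n ≡ n' [MOD (2 ^ M).factorial]) (h : Rch δ C n s t) : Rch δ C n' s t := by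
  classical
  let post : Set Q → Set Q := fun X => {t | ∃ s ∈ X, ∃ a, C a ∧ δ s a = t}
  have hp : ∀ n, post^[n] {s} = {t | Rch δ C n s t} := by
    intro n
    induction n with
    | zero =>
      ext t
      simp only [Function.iterate_zero, id_eq, Set.mem_singleton_iff, Set.mem_ofPred_eq, Rch]
      constructor
      · rintro rfl; exact ⟨[], rfl, by simp, rfl⟩
      · rintro ⟨v, hv, -, h⟩
        rw [List.length_eq_zero_iff] at hv
        subst hv; exact h.symm
    | succ n ih =>
      ext t
      rw [Function.iterate_succ_apply', ih]
      simp only [post, Set.mem_ofPred_eq, Rch]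
      constructor
      · rintro ⟨r, ⟨v, hv, hC, hr⟩, a, ha, ht⟩
        refine ⟨v ++ [a], by simp [hv], ?_, by simp [hr, ht]⟩
        intro x hx
        rcases List.mem_append.1 hx with hx | hx
        · exact hC x hx
        · rw [List.mem_singleton.1 hx]; exact ha
      · rintro ⟨v, hv, hC, hr⟩
        rcases List.eq_nil_or_concat v with rfl | ⟨v', a, rfl⟩
        · simp at hv
        · refine ⟨v'.foldl δ s, ⟨v', by simpa using hv, fun x hx => hC x (by simp [hx]), rfl⟩,
            a, hC a (by simp), by simpa using hr⟩
  have hcard : Fintype.card (Set Q) ≤ 2 ^ M := by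
    rw [Fintype.card_set]; exact Nat.pow_le_pow_right (by norm_num) hM
  have hset : post^[n] {s} = post^[n'] {s} := by
    rcases le_total n n' with hle | hle
    · obtain ⟨c, hc⟩ := (Nat.modEq_iff_dvd' hle).1 hmod
      rw [show n' = n + c * (2 ^ M).factorial by rw [mul_comm, ← hc]; omega]
      exact (iterate_periodic post _ hcard _ _ _ hn).symm
    · obtain ⟨c, hc⟩ := (Nat.modEq_iff_dvd' hle).1 hmod.symm
      rw [show n = n' + c * (2 ^ M).factorial by rw [mul_comm, ← hc]; omega]
      exact iterate_periodic post _ hcard _ _ _ hn'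
  rw [hp, hp] at hset
  have : t ∈ {t | Rch δ C n s t} := h
  rw [hset] at this
  exact this

theorem Rch_short {Q : Type} [Fintype Q] (δ : Q → α → Q) (C : α → Prop) (M : ℕ)
    (hM : Fintype.card Q ≤ M) (n : ℕ) (s t : Q) (h : Rch δ C n s t) :
    ∃ n' ≤ 2 ^ M + (2 ^ M).factorial, Rch δ C n' s t := by
  by_cases hn : n ≤ 2 ^ M
  · exact ⟨n, by omega, h⟩
  · refine ⟨2 ^ M + (n - 2 ^ M) % (2 ^ M).factorial, ?_, ?_⟩
    · have := Nat.mod_lt (n - 2 ^ M) (Nat.factorial_pos (2 ^ M)); omega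
    · refine Rch_pump δ C M hM n _ s t (by omega) (by omega) ?_ h
      have h1 : (n - 2 ^ M) % (2 ^ M).factorial ≡ n - 2 ^ M [MOD (2 ^ M).factorial] :=
        Nat.mod_modEq _ _
      have h2 := h1.add_left (2 ^ M)
      rw [show 2 ^ M + (n - 2 ^ M) = n by omega] at h2
      exact h2.symm

end vals

/-! ### The small-solution bound -/

/-- number of states for the reduced automaton -/
def bH (M : ℕ) : ℕ :=
  M * ((2 ^ M).factorial * ((2 ^ M).factorial * (2 ^ M).factorial)) * (2 ^ (2 ^ M + 6)) ^ 4

/-- additive term -/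
def bR (M : ℕ) : ℕ := 2 ^ (2 ^ M + 3) + 2 + 2 ^ M + (2 ^ M).factorial

/-- the bound -/
def bF : ℕ → ℕ → ℕ
  | 0, M => bR M
  | k + 1, M => 2 ^ bF k (bH M) + bR M

section core
variable {α ι : Type} (x y : ι → α → ℕ)

/-- all pairs of tracks in `S` satisfy `Y = 2 ^ X` -/
def Good (S : Finset ι) (w : List α) : Prop := ∀ i ∈ S, nval (y i) w = 2 ^ nval (x i) w

theorem core_zero (M : ℕ) (p : List α → Prop) (hp : FS M p) (w : List α) (hw : p w) :
    ∃ w', p w' ∧ w'.length ≤ bR M := by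
  obtain ⟨Q, i, δ, q0, out, hc, hg⟩ := hp
  obtain ⟨n', hn', v, hv, -, hv2⟩ := Rch_short δ (fun _ => True) M hc w.length q0 _
    ⟨w, rfl, by simp, rfl⟩
  refine ⟨v, ?_, ?_⟩
  · rw [hg, hv2, ← hg]; exact hw
  · have h3 : 0 < 2 ^ (2 ^ M + 3) := by positivity
    rw [hv]; unfold bR; omega

theorem exists_split (w : List α) (n : ℕ) (h : n < w.length) :
    ∃ t a v, w = t ++ a :: v ∧ t.length = n := by
  refine ⟨w.take n, w[n], w.drop (n + 1), ?_, ?_⟩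
  · rw [List.getElem_cons_drop, List.take_append_drop]
  · simp; omega

theorem high_zero {f : α → ℕ} {u v : List α} (h : nval f (u ++ v) < 2 ^ u.length) :
    nval f v = 0 := by
  rw [nval_append] at h
  by_contra hne
  have : 2 ^ u.length * 1 ≤ 2 ^ u.length * nval f v :=
    Nat.mul_le_mul_left _ (Nat.one_le_iff_ne_zero.2 hne)
  omega

theorem low_of_high_zero {f : α → ℕ} {u v : List α} (h : nval f v = 0) :
    nval f (u ++ v) = nval f u := by
  rw [nval_append, h]; simp

/-- The main case of the reduction. -/
theorem core_main [DecidableEq ι] (hx : ∀ i a, x i a ≤ 1) (hy : ∀ i a, y i a ≤ 1)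
    (k M : ℕ) (S : Finset ι) (p : List α → Prop) (hp : FS M p) (w : List α) (hw : p w)
    (hgood : Good x y S w) (i : ι) (hi : i ∈ S)
    (IH : ∀ p' : List α → Prop, FS (bH M) p' → ∀ w', p' w' → Good x y (S.erase i) w' →
      ∃ w'', p' w'' ∧ Good x y (S.erase i) w'' ∧ w''.length ≤ bF k (bH M))
    (hmax : ∀ j ∈ S, nval (x j) w ≤ nval (x i) w)
    (c : ℕ) (hcT : c + 2 ^ M ≤ nval (x i) w)
    (hcx : nval (x i) w < 2 ^ c) (hcy : ∀ j ∈ S.erase i, nval (x j) w < c)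
    (e : List α → Prop) (he : FS ((2 ^ (2 ^ M + 6)) ^ 3) e)
    (heu : e (w.take c))
    (hee : ∀ u, Good x y (S.erase i) u → e u → u.length + 2 ^ M ≤ nval (x i) u) :
    ∃ w', p w' ∧ Good x y S w' ∧ w'.length ≤ bF (k + 1) M := by
  obtain ⟨Q, inst, δ, q0, out, hc, hg⟩ := hp
  set P := (2 ^ M).factorial with hP
  have : NeZero P := ⟨(Nat.factorial_pos _).ne'⟩
  have hTpos : 0 < 2 ^ M := by positivity
  have hT3 : 0 < 2 ^ (2 ^ M + 3) := by positivity
  set T := 2 ^ M with hT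
  -- blank letters
  let C : α → Prop := fun a => ∀ j ∈ S, x j a = 0 ∧ y j a = 0
  let R : Q × (ZMod P × ZMod P) → Prop := fun z => ∃ n : ℕ, T ≤ n ∧ ((n : ZMod P) = z.2.1 - z.2.2) ∧
    ∃ s a t, Rch δ C n z.1 s ∧ ((∀ j ∈ S, x j a = 0) ∧ (∀ j ∈ S.erase i, y j a = 0) ∧ y i a = 1) ∧
      (∃ n', Rch δ C n' (δ s a) t) ∧ out t
  have hF1 : FS M (fun u : List α => u.foldl δ q0) := ⟨Q, inst, δ, q0, id, hc, fun u => rfl⟩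
  have hF2 := (hF1.pair (FS_mod (x i) P)).comp R
  have hF3 : FS (2 ^ (T + 6)) (fun u => 0 ≤ zval (fun a => (-1) * (y i a : ℤ)) u) := by
    refine FS_ge _ 0 1 _ ?_ ?_
    · intro a
      have := hy i a
      rw [abs_le]; constructor <;> push_cast <;> omega
    · have : 2 ^ 6 ≤ 2 ^ (T + 6) := Nat.pow_le_pow_right (by norm_num) (by omega)
      simp; omega
  have hF := (hF2.and (he.and hF3)).mono (m' := bH M) (by
    unfold bH
    rw [← pow_succ])
  -- decomposition of w
  have hXlen : nval (x i) w < w.length := by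
    have h1 := hgood i hi
    have h2 := nval_lt (y i) (hy i) w
    rw [h1] at h2
    exact (Nat.pow_lt_pow_iff_right (by norm_num)).1 h2
  obtain ⟨t, a, v2, hw1, ht⟩ := exists_split w _ hXlen
  obtain ⟨u, v1, hu1, hu⟩ : ∃ u v1, t = u ++ v1 ∧ u.length = c :=
    ⟨t.take c, t.drop c, (List.take_append_drop _ _).symm, by simp; omega⟩
  have hwu : w = u ++ (v1 ++ a :: v2) := by rw [hw1, hu1]; simp
  have htake : w.take c = u := by rw [hwu, ← hu]; simp
  rw [htake] at heu
  -- x tracks vanish in the high part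
  have hxz : ∀ j ∈ S, nval (x j) (v1 ++ a :: v2) = 0 := by
    intro j hj
    apply high_zero (u := u)
    rw [← hwu, hu]
    exact lt_of_le_of_lt (hmax j hj) hcx
  have hyz : ∀ j ∈ S.erase i, nval (y j) (v1 ++ a :: v2) = 0 := by
    intro j hj
    apply high_zero (u := u)
    rw [← hwu, hu, hgood j (Finset.mem_of_mem_erase hj)]
    exact Nat.pow_lt_pow_right (by norm_num) (hcy j hj)
  have hyi : nval (y i) t = 0 ∧ y i a = 1 ∧ nval (y i) v2 = 0 := by
    have h1 := hgood i hi
    rw [hw1, nval_append, ht, ← hw1] at h1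
    have h2 := nval_lt (y i) (hy i) t
    rw [ht] at h2
    simp only [nval] at h1
    have h3 := hy i a
    have h4 : y i a + 2 * nval (y i) v2 = 1 := by
      generalize y i a + 2 * nval (y i) v2 = z at *
      rcases Nat.lt_trichotomy z 1 with h | h | h
      · have : z = 0 := by omega
        subst this; omega
      · exact h
      · have : 2 ^ nval (x i) w * 2 ≤ 2 ^ nval (x i) w * z := Nat.mul_le_mul_left _ h
        have : 0 < 2 ^ nval (x i) w := by positivity
        omega
    rw [h4] at h1
    omega
  have hyt := hyi.1
  rw [hu1, nval_append] at hyt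
  have hyu : nval (y i) u = 0 := by omega
  have hyv1 : nval (y i) v1 = 0 := by
    have h0 : 2 ^ u.length * nval (y i) v1 = 0 := by omega
    rcases Nat.mul_eq_zero.1 h0 with h | h
    · exact absurd h (by positivity)
    · exact h
  have hxu : ∀ j ∈ S, nval (x j) u = nval (x j) w := by
    intro j hj
    rw [hwu, low_of_high_zero (hxz j hj)]
  have hgu : Good x y (S.erase i) u := by
    intro j hj
    rw [hxu j (Finset.mem_of_mem_erase hj), ← hgood j (Finset.mem_of_mem_erase hj), hwu,
      low_of_high_zero (hyz j hj)]
  have hv1C : ∀ b ∈ v1, C b := by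
    intro b hb j hj
    refine ⟨(nval_eq_zero _ _).1 (hxz j hj) b (by simp [hb]), ?_⟩
    by_cases hji : j = i
    · subst hji; exact (nval_eq_zero _ _).1 hyv1 b hb
    · exact (nval_eq_zero _ _).1 (hyz j (Finset.mem_erase.2 ⟨hji, hj⟩)) b (by simp [hb])
  have hv2C : ∀ b ∈ v2, C b := by
    intro b hb j hj
    refine ⟨(nval_eq_zero _ _).1 (hxz j hj) b (by simp [hb]), ?_⟩
    by_cases hji : j = i
    · subst hji; exact (nval_eq_zero _ _).1 hyi.2.2 b hb
    · exact (nval_eq_zero _ _).1 (hyz j (Finset.mem_erase.2 ⟨hji, hj⟩)) b (by simp [hb])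
  have hv1len : v1.length = nval (x i) w - c := by
    have := congrArg List.length hu1
    rw [List.length_append] at this
    omega
  have hstart : (R (u.foldl δ q0, ((nval (x i) u : ZMod P), (u.length : ZMod P)))) ∧
      (e u ∧ 0 ≤ zval (fun a => (-1) * (y i a : ℤ)) u) := by
    refine ⟨⟨v1.length, by omega, ?_, v1.foldl δ (u.foldl δ q0), a,
      v2.foldl δ (δ (v1.foldl δ (u.foldl δ q0)) a), ⟨v1, rfl, hv1C, rfl⟩, ⟨?_, ?_, hyi.2.1⟩,
      ⟨v2.length, v2, rfl, hv2C, rfl⟩, ?_⟩, heu, ?_⟩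
    · simp only
      rw [hxu i hi, hv1len, hu, Nat.cast_sub (by omega)]
    · intro j hj
      exact (nval_eq_zero _ _).1 (hxz j hj) a (by simp)
    · intro j hj
      exact (nval_eq_zero _ _).1 (hyz j hj) a (by simp)
    · have h1 := hw
      rw [hg, hwu] at h1
      simpa using h1
    · rw [zval_mul, zval_cast, hyu]; simp
  obtain ⟨u', ⟨⟨n, hnT, hnP, s, b, t', hr1, ⟨hb1, hb2, hb3⟩, ⟨n', hr2⟩, hout⟩, heu', hyu'⟩,
    hgu', hlen⟩ := IH _ hF u hstart hgu
  have hyu0 : nval (y i) u' = 0 := by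
    rw [zval_mul, zval_cast] at hyu'
    omega
  have hge := hee u' hgu' heu'
  obtain ⟨v1', hv1l, hv1C', hv1f⟩ := Rch_pump δ C M hc n (nval (x i) u' - u'.length) _ s hnT
    (by omega) (by
      rw [← ZMod.natCast_eq_natCast_iff, hnP, Nat.cast_sub (by omega)]) hr1
  obtain ⟨n2, hn2, v2', hv2l, hv2C', hv2f⟩ := Rch_short δ C M hc n' _ _ hr2
  simp only at hv1f
  have hxz' : ∀ j ∈ S, nval (x j) (v1' ++ b :: v2') = 0 := by
    intro j hj
    rw [nval_eq_zero]
    intro z hz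
    rcases List.mem_append.1 hz with hz | hz
    · exact (hv1C' z hz j hj).1
    · rcases List.mem_cons.1 hz with rfl | hz
      · exact hb1 j hj
      · exact (hv2C' z hz j hj).1
  refine ⟨u' ++ (v1' ++ b :: v2'), ?_, ?_, ?_⟩
  · rw [hg]
    simp only [List.foldl_append, List.foldl_cons, hv1f, hv2f]
    exact hout
  · intro j hj
    rw [low_of_high_zero (hxz' j hj)]
    by_cases hji : j = i
    · subst hji
      rw [nval_append, nval_append, hyu0, hv1l, (nval_eq_zero _ v1').2 (fun z hz => (hv1C' z hz j hj).2)]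
      simp only [nval, hb3, (nval_eq_zero _ v2').2 (fun z hz => (hv2C' z hz j hj).2)]
      simp only [zero_add, mul_zero, add_zero, mul_one]
      rw [← pow_add]; congr 1; omega
    · have hje := Finset.mem_erase.2 ⟨hji, hj⟩
      rw [low_of_high_zero, hgu' j hje]
      rw [nval_eq_zero]
      intro z hz
      rcases List.mem_append.1 hz with hz | hz
      · exact (hv1C' z hz j hj).2
      · rcases List.mem_cons.1 hz with rfl | hz
        · exact hb2 j hje
        · exact (hv2C' z hz j hj).2
  · simp only [List.length_append, List.length_cons, hv1l, hv2l, bF]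
    have h1 := nval_lt (x i) (hx i) u'
    have h2 : 2 ^ u'.length ≤ 2 ^ bF k (bH M) := Nat.pow_le_pow_right (by norm_num) hlen
    unfold bR
    rw [← hT]
    omega

theorem core [DecidableEq ι] (hx : ∀ i a, x i a ≤ 1) (hy : ∀ i a, y i a ≤ 1) (k : ℕ) :
    ∀ (M : ℕ) (S : Finset ι), S.card = k → ∀ p : List α → Prop, FS M p →
    ∀ w, p w → Good x y S w → ∃ w', p w' ∧ Good x y S w' ∧ w'.length ≤ bF k M := by
  induction k with
  | zero =>
    intro M S hS p hp w hw _
    obtain ⟨w', h1, h2⟩ := core_zero M p hp w hw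
    refine ⟨w', h1, ?_, h2⟩
    rw [Finset.card_eq_zero.1 hS]
    intro i hi; simp at hi
  | succ k ih =>
    intro M S hS p hp w hw hgood
    obtain ⟨i, hi, hmax⟩ := Finset.exists_max_image S (fun i => nval (x i) w)
      (Finset.card_pos.1 (by omega))
    have hcard : (S.erase i).card = k := by rw [Finset.card_erase_of_mem hi]; omega
    have IH := fun p' hp' w' h1 h2 => ih (bH M) (S.erase i) hcard p' hp' w' h1 h2
    have hE : 0 < 2 ^ (2 ^ M + 6) := by positivity
    have hE6 : 2 ^ (2 ^ M + 6) = 64 * 2 ^ (2 ^ M) := by rw [pow_add]; ring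
    have hTpos : 0 < 2 ^ M := by positivity
    have hEE : 2 ^ (2 ^ M + 6) * 2 ^ (2 ^ M + 6) ≤ (2 ^ (2 ^ M + 6)) ^ 3 := by
      rw [← pow_two]; exact Nat.pow_le_pow_right hE (by norm_num)
    have hTT : 2 ^ M < 2 ^ 2 ^ M := Nat.lt_two_pow_self
    have hTT1 : 1 ≤ 2 ^ 2 ^ M := Nat.one_le_two_pow
    have hPpos := Nat.factorial_pos (2 ^ M)
    by_cases hC : ∃ j ∈ S.erase i, nval (x i) w ≤ nval (x j) w + 2 ^ M
    · -- two close exponents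
      obtain ⟨j, hj, hij⟩ := hC
      have hjS := Finset.mem_of_mem_erase hj
      have hji := hmax j hjS
      obtain ⟨t, ht⟩ := Nat.exists_eq_add_of_le hji
      have htT : t ≤ 2 ^ M := by omega
      have h2t : 2 ^ t ≤ 2 ^ 2 ^ M := Nat.pow_le_pow_right (by norm_num) htT
      have hF1 := FS_eq (fun a => (x i a : ℤ) - x j a) t 1 (2 ^ (2 ^ M + 6))
        (by
          intro a
          have := hx i a
          have := hx j a
          rw [abs_le]; constructor <;> push_cast <;> omega) (by
            simp only [Int.natAbs_natCast]; omega)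
      have hF2 := FS_eq (fun a => (y i a : ℤ) - (2 ^ t : ℕ) * (y j a : ℤ)) 0 (2 ^ t + 1)
        (2 ^ (2 ^ M + 6))
        (by
          intro a
          have h1 := hy i a
          have h2 : y j a = 0 ∨ y j a = 1 := by have := hy j a; omega
          have h3 : (0 : ℤ) < 2 ^ t := by positivity
          rw [abs_le]
          rcases h2 with h2 | h2 <;> rw [h2] <;> constructor <;> push_cast <;> omega) (by
            simp only [Int.natAbs_zero]; omega)
      have hF := (hp.and (hF1.and hF2)).mono (m' := bH M) (by
        unfold bH
        rw [show M * (2 ^ (2 ^ M + 6) * 2 ^ (2 ^ M + 6) * (2 ^ (2 ^ M + 6) * 2 ^ (2 ^ M + 6)))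
          = M * 1 * (2 ^ (2 ^ M + 6)) ^ 4 by ring]
        gcongr
        have : 0 < (2 ^ M).factorial * ((2 ^ M).factorial * (2 ^ M).factorial) := by positivity
        exact this)
      simp only [zval_sub, zval_mul, zval_cast] at hF
      obtain ⟨w', ⟨h1, h2, h3⟩, h4, h5⟩ := IH _ hF w ⟨hw, by omega, by
        rw [hgood i hi, hgood j hjS, ht, pow_add]; push_cast; ring⟩
        (fun l hl => hgood l (Finset.mem_of_mem_erase hl))
      refine ⟨w', h1, ?_, ?_⟩
      · intro l hl
        by_cases hli : l = i
        · subst hli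
          have h6 := h4 j hj
          have h7 : nval (y l) w' = 2 ^ t * nval (y j) w' := by
            zify; push_cast at h3; linarith
          have h8 : nval (x l) w' = t + nval (x j) w' := by omega
          rw [h7, h6, h8, pow_add]
        · exact h4 l (Finset.mem_erase.2 ⟨hli, hl⟩)
      · simp only [bF]
        have : bF k (bH M) < 2 ^ bF k (bH M) := Nat.lt_two_pow_self
        omega
    push Not at hC
    set q := Nat.size (nval (x i) w) with hq
    have hq1 : nval (x i) w < 2 ^ q := Nat.lt_size_self _
    by_cases hD : q < 2 ^ M + 3
    · -- bounded case
      obtain ⟨Q, inst, δ, q0, out, hc, hg⟩ := hp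
      have hXlen : nval (x i) w < w.length := by
        have h1 := hgood i hi
        have h2 := nval_lt (y i) (hy i) w
        rw [h1] at h2
        exact (Nat.pow_lt_pow_iff_right (by norm_num)).1 h2
      set u := w.take (nval (x i) w + 1) with hu
      set v := w.drop (nval (x i) w + 1) with hv
      have hwuv : w = u ++ v := (List.take_append_drop _ _).symm
      have hul : u.length = nval (x i) w + 1 := by rw [hu]; simp; omega
      have hxz : ∀ j ∈ S, nval (x j) v = 0 := by
        intro j hj
        apply high_zero (u := u)
        rw [← hwuv, hul]
        calc nval (x j) w ≤ nval (x i) w := hmax j hj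
          _ < nval (x i) w + 1 := by omega
          _ < _ := Nat.lt_two_pow_self
      have hyz : ∀ j ∈ S, nval (y j) v = 0 := by
        intro j hj
        apply high_zero (u := u)
        rw [← hwuv, hul, hgood j hj]
        exact Nat.pow_lt_pow_right (by norm_num) (by have := hmax j hj; omega)
      obtain ⟨n2, hn2, v2', hv2l, hv2C', hv2f⟩ := Rch_short δ
        (fun a => ∀ j ∈ S, x j a = 0 ∧ y j a = 0) M hc v.length (u.foldl δ q0) _
        ⟨v, rfl, fun a ha j hj => ⟨(nval_eq_zero _ _).1 (hxz j hj) a ha,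
          (nval_eq_zero _ _).1 (hyz j hj) a ha⟩, rfl⟩
      refine ⟨u ++ v2', ?_, ?_, ?_⟩
      · rw [hg, List.foldl_append, hv2f, ← List.foldl_append, ← hwuv, ← hg]
        exact hw
      · intro j hj
        rw [low_of_high_zero ((nval_eq_zero _ v2').2 (fun z hz => (hv2C' z hz j hj).1)),
          low_of_high_zero ((nval_eq_zero _ v2').2 (fun z hz => (hv2C' z hz j hj).2))]
        have := hgood j hj
        rw [hwuv, low_of_high_zero (hxz j hj), low_of_high_zero (hyz j hj)] at this
        exact this
      · rw [List.length_append, hul, hv2l]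
        have : 2 ^ q ≤ 2 ^ (2 ^ M + 3) := Nat.pow_le_pow_right (by norm_num) (by omega)
        simp only [bF]
        have : 0 < 2 ^ bF k (bH M) := by positivity
        unfold bR
        omega
    push Not at hD
    have hq2 : 2 ^ (q - 1) ≤ nval (x i) w := by
      apply Nat.lt_size.1; omega
    have hqT : q + 2 ^ M ≤ nval (x i) w := by
      have h1 : q - 2 < 2 ^ (q - 2) := Nat.lt_two_pow_self
      have h2 : 2 ^ (q - 1) = 2 * 2 ^ (q - 2) := by
        rw [show q - 1 = (q - 2) + 1 by omega, pow_succ]; ring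
      omega
    have hXlen : nval (x i) w < w.length := by
      have h1 := hgood i hi
      have h2 := nval_lt (y i) (hy i) w
      rw [h1] at h2
      exact (Nat.pow_lt_pow_iff_right (by norm_num)).1 h2
    by_cases hA : ∃ j ∈ S.erase i, q ≤ nval (x j) w
    · obtain ⟨j, hj, hjmax⟩ := Finset.exists_max_image (S.erase i) (fun i => nval (x i) w)
        (by obtain ⟨j, hj, _⟩ := hA; exact ⟨j, hj⟩)
      have hjS := Finset.mem_of_mem_erase hj
      have hqj : q ≤ nval (x j) w := by
        obtain ⟨j', hj', h⟩ := hA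
        exact h.trans (hjmax j' hj')
      have hjlt := hC j hj
      have hF1 := FS_ge (fun a => (2 * (y j a : ℤ)) - 1) 0 1 (2 ^ (2 ^ M + 6)) (by
        intro a
        have := hy j a
        rw [abs_le]; constructor <;> push_cast <;> omega) (by simp; omega)
      have hF2 := FS_ge (fun a => (x i a : ℤ) - x j a) (2 ^ M + 1 : ℕ) 1 (2 ^ (2 ^ M + 6)) (by
        intro a
        have := hx i a
        have := hx j a
        rw [abs_le]; constructor <;> push_cast <;> omega) (by
          simp only [Int.natAbs_natCast]; omega)
      have hF := (hF1.and hF2).mono (m' := (2 ^ (2 ^ M + 6)) ^ 3) hEE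
      simp only [zval_sub, zval_mul, zval_cast, zval_one] at hF
      have hlow : ∀ (f : α → ℕ), nval f w < 2 ^ (nval (x j) w + 1) →
          nval f (w.take (nval (x j) w + 1)) = nval f w := by
        intro f hf
        have hl : (w.take (nval (x j) w + 1)).length = nval (x j) w + 1 := by simp; omega
        conv_rhs => rw [← List.take_append_drop (nval (x j) w + 1) w]
        rw [low_of_high_zero]
        apply high_zero (u := w.take (nval (x j) w + 1))
        rw [List.take_append_drop, hl]; exact hf
      have hxi : nval (x i) w < 2 ^ (nval (x j) w + 1) :=
        hq1.trans_le (Nat.pow_le_pow_right (by norm_num) (by omega))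
      refine core_main x y hx hy k M S p hp w hw hgood i hi IH hmax (nval (x j) w + 1)
        (by omega) hxi ?_ _ hF ?_ ?_
      · intro l hl
        have := hjmax l hl
        omega
      · rw [hlow _ hxi, hlow (x j) (by omega),
          hlow (y j) (by rw [hgood j hjS]; exact Nat.pow_lt_pow_right (by norm_num) (by omega)),
          hgood j hjS]
        have hl : (w.take (nval (x j) w + 1)).length = nval (x j) w + 1 := by simp; omega
        rw [hl, pow_succ]
        push_cast
        constructor
        · linarith
        · have : ((nval (x j) w + 2 ^ M : ℕ) : ℤ) < nval (x i) w := by exact_mod_cast hjlt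
          push_cast at this
          linarith
      · rintro u hgu ⟨h1, h2⟩
        rw [hgu j hj] at h1
        have h3 : u.length ≤ nval (x j) u + 1 := by
          by_contra hlt
          push Not at hlt
          have h4 : 2 ^ (nval (x j) u + 2) ≤ 2 ^ u.length :=
            Nat.pow_le_pow_right (by norm_num) (by omega)
          have h5 : 1 ≤ 2 ^ nval (x j) u := Nat.one_le_two_pow
          rw [pow_succ, pow_succ] at h4
          zify at h4 h5
          push_cast at h1
          linarith
        omega
    · push Not at hA
      have hF1 := FS_ge (fun a => (2 * (x i a : ℤ)) - 1) 0 1 (2 ^ (2 ^ M + 6)) (by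
        intro a
        have := hx i a
        rw [abs_le]; constructor <;> push_cast <;> omega) (by simp; omega)
      have h8 : 2 ^ (2 ^ M + 3) = 8 * 2 ^ (2 ^ M) := by rw [pow_add]; ring
      have hF2 := FS_ge (fun _ : α => (1 : ℤ)) (2 ^ (2 ^ M + 3) - 1 : ℕ) 1 (2 ^ (2 ^ M + 6)) (by
        intro a
        simp) (by
          simp only [Int.natAbs_natCast]; omega)
      have hF := (hF1.and hF2).mono (m' := (2 ^ (2 ^ M + 6)) ^ 3) hEE
      simp only [zval_sub, zval_mul, zval_cast, zval_one] at hF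
      have hl : (w.take q).length = q := by simp; omega
      refine core_main x y hx hy k M S p hp w hw hgood i hi IH hmax q
        hqT hq1 hA _ hF ?_ ?_
      · have : nval (x i) (w.take q) = nval (x i) w := by
          conv_rhs => rw [← List.take_append_drop q w]
          rw [low_of_high_zero]
          apply high_zero (u := w.take q)
          rw [List.take_append_drop, hl]; exact hq1
        rw [this, hl]
        have h9 : 2 ^ (2 ^ M + 3) ≤ 2 ^ q := Nat.pow_le_pow_right (by norm_num) hD
        have h10 : 2 ^ q = 2 * 2 ^ (q - 1) := by
          conv_lhs => rw [show q = (q - 1) + 1 by omega, pow_succ]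
          ring
        constructor
        · zify at h10 hq2; linarith
        · rw [Nat.cast_sub Nat.one_le_two_pow]
          zify at h9; push_cast; linarith
      · rintro u hgu ⟨h1, h2⟩
        have h3 : 2 ^ u.length ≤ 2 * nval (x i) u + 1 := by zify; linarith
        have h4 : 2 ^ (2 ^ M + 3) ≤ 2 ^ u.length := by
          rw [Nat.cast_sub Nat.one_le_two_pow] at h2
          zify; push_cast at h2; linarith
        have h5 := (Nat.pow_le_pow_iff_right (by norm_num)).1 h4
        have h6 : u.length - 2 < 2 ^ (u.length - 2) := Nat.lt_two_pow_self
        have h7 : 2 ^ u.length = 4 * 2 ^ (u.length - 2) := by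
          conv_lhs => rw [show u.length = (u.length - 2) + 2 by omega, pow_add]
          ring
        omega

end core

/-! ### Encoding of formulas -/

theorem encode_int_bound (z : ℤ) : z.natAbs ≤ Encodable.encode z := by
  rcases z with n | n
  · change n ≤ 2 * n
    omega
  · change n + 1 ≤ 2 * n + 1
    omega

theorem mem_le_encode {β : Type} [Encodable β] (l : List β) :
    l.length ≤ Encodable.encode l ∧ ∀ a ∈ l, Encodable.encode a ≤ Encodable.encode l := by
  induction l with
  | nil => simp
  | cons a l ih =>
    rw [Encodable.encode_list_cons]
    have h1 := Nat.left_le_pair (Encodable.encode a) (Encodable.encode l)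
    have h2 := Nat.right_le_pair (Encodable.encode a) (Encodable.encode l)
    refine ⟨by rw [List.length_cons]; omega, ?_⟩
    intro b hb
    rcases List.mem_cons.1 hb with rfl | hb
    · omega
    · have := ih.2 b hb; omega

theorem RawDFA2.start_le (D : RawDFA2) : D.start ≤ D.enc := by
  unfold RawDFA2.enc
  simp only [Encodable.encode_prod_val]
  refine le_trans ?_ (Nat.right_le_pair _ _)
  refine le_trans ?_ (Nat.right_le_pair _ _)
  exact Nat.left_le_pair _ _

theorem RawDFA2.trans_le (D : RawDFA2) (q : ℕ) (hq : q ∈ D.trans) : q ≤ D.enc := by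
  unfold RawDFA2.enc
  simp only [Encodable.encode_prod_val]
  refine le_trans ?_ (Nat.right_le_pair _ _)
  refine le_trans ?_ (Nat.left_le_pair _ _)
  exact (mem_le_encode D.trans).2 q hq

theorem RawDFA2.step_le (D : RawDFA2) (q : ℕ) (b : Bool) : D.step q b < D.enc + 1 := by
  unfold RawDFA2.step
  rw [List.getD_eq_getElem?_getD]
  cases h : D.trans[2 * q + b.toNat]? with
  | none => simp
  | some r =>
    have := D.trans_le r (List.mem_of_getElem? h)
    simp; omega

theorem strVal_append (l : List Bool) (b : Bool) : strVal (l ++ [b]) = 2 * strVal l + b.toNat := by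
  simp [strVal]

theorem strVal_inj (l : List Bool) : ∀ l' : List Bool, l.length = l'.length →
    strVal l = strVal l' → l = l' := by
  induction l using List.reverseRecOn with
  | nil => intro l' h _; exact (List.length_eq_zero_iff.1 h.symm).symm
  | append_singleton l b ih =>
    intro l' h hv
    rcases List.eq_nil_or_concat l' with rfl | ⟨l'', c, rfl⟩
    · simp at h
    · rw [List.concat_eq_append] at *
      rw [strVal_append, strVal_append] at hv
      have h1 : l = l'' := by
        apply ih
        · simpa using h
        · cases b <;> cases c <;> simp at hv <;> omega
      subst h1
      cases b <;> cases c <;> simp at hv ⊢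

/-- Letters: `a t s` is the bit of track `t` of variable `s`; track 0 is the value of the string,
track 1 is two to the length, track 2 is the length and track 3 is the integer variable. -/
abbrev Ltr : Type := ℕ → ℕ → Bool

/-- a track as a weight -/
def tr (t s : ℕ) (a : Ltr) : ℕ := (a t s).toNat

theorem tr_le (t s : ℕ) (a : Ltr) : tr t s a ≤ 1 := Bool.toNat_le _

/-- the string coded by a word -/
def strOf (s : ℕ) : List Ltr → List Bool
  | [] => []
  | a :: u => if a 1 s then [] else strOf s u ++ [a 0 s]

theorem strOf_len_le (s : ℕ) (u : List Ltr) : (strOf s u).length ≤ u.length := by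
  induction u with
  | nil => simp [strOf]
  | cons a u ih => simp only [strOf]; split <;> simp; exact ih

theorem strOf_spec (s : ℕ) (u : List Ltr) : ∀ X, nval (tr 1 s) u = 2 ^ X →
    (strOf s u).length = X ∧ (nval (tr 0 s) u < 2 ^ X → strVal (strOf s u) = nval (tr 0 s) u) := by
  induction u with
  | nil => intro X h; simp only [nval] at h; exact absurd h.symm (by positivity)
  | cons a u ih =>
    intro X h
    simp only [nval] at h
    cases ha : a 1 s with
    | true =>
      have h1 : tr 1 s a = 1 := by simp [tr, ha]
      have hX : X = 0 := by
        rcases X with _ | X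
        · rfl
        · rw [pow_succ] at h; omega
      subst hX
      simp only [strOf, ha]
      refine ⟨rfl, fun h => ?_⟩
      simp at h
      simp [h, strVal]
    | false =>
      have h1 : tr 1 s a = 0 := by simp [tr, ha]
      rcases X with _ | X
      · omega
      rw [pow_succ] at h
      obtain ⟨e1, e2⟩ := ih X (by omega)
      simp only [strOf, ha, nval]
      refine ⟨by simp [e1], fun h => ?_⟩
      rw [pow_succ] at h
      simp only [Bool.false_eq_true, if_false]
      rw [strVal_append, e2 (by omega)]
      simp only [tr]; omega

theorem strOf_append (s : ℕ) (u : List Ltr) (a : Ltr) : strOf s (u ++ [a]) =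
    if (u.any fun b => b 1 s) || a 1 s then strOf s u else a 0 s :: strOf s u := by
  induction u with
  | nil => simp [strOf]
  | cons b u ih =>
    simp only [List.cons_append, strOf, ih, List.any_cons]
    by_cases hb : b 1 s = true
    · simp [hb]
    · simp only [hb, Bool.false_or, Bool.false_eq_true, if_false]
      split <;> simp

theorem FS_reg (D : RawDFA2) (s : ℕ) :
    FS (2 * (D.enc + 1) ^ (D.enc + 1)) (fun w => D.Accepts (strOf s w)) := by
  have hrun : ∀ (l : List Bool) (q : Fin (D.enc + 1)), l.foldl D.step q < D.enc + 1 := by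
    intro l
    induction l with
    | nil => intro q; exact q.2
    | cons b l ih => intro q; exact ih ⟨D.step q b, D.step_le _ _⟩
  refine FS.mk' (Q := Bool × (Fin (D.enc + 1) → Fin (D.enc + 1)))
    (fun u => (u.any fun b => b 1 s, fun q => ⟨(strOf s u).foldl D.step q, hrun _ _⟩))
    (fun z a => (z.1 || a 1 s, if z.1 || a 1 s then z.2 else
      fun q => z.2 ⟨D.step q (a 0 s), D.step_le _ _⟩))
    (fun z => ((z.2 ⟨D.start, Nat.lt_succ_of_le D.start_le⟩ : Fin _) : ℕ) ∈ D.accept) ?_ ?_ ?_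
  · simp
  · intro u a
    refine Prod.ext (by simp) ?_
    funext q
    apply Fin.ext
    simp only [strOf_append]
    split <;> simp
  · intro u; rfl

/-- state bound for formulas -/
def bS (n : ℕ) : ℕ := 2 ^ ((n + 6) * (n + 6))

/-- the tracks of variable `s` are consistent -/
def WF (s : ℕ) (w : List Ltr) : Prop :=
  nval (tr 1 s) w = 2 ^ nval (tr 2 s) w ∧ nval (tr 0 s) w < nval (tr 1 s) w

theorem WF.len {s : ℕ} {w : List Ltr} (h : WF s w) : (strOf s w).length = nval (tr 2 s) w :=
  (strOf_spec s w _ h.1).1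

theorem WF.val {s : ℕ} {w : List Ltr} (h : WF s w) : strVal (strOf s w) = nval (tr 0 s) w :=
  (strOf_spec s w _ h.1).2 (h.1 ▸ h.2)

theorem FS_tr_eq (t s t' s' : ℕ) :
    FS 9 (fun w : List Ltr => nval (tr t s) w = nval (tr t' s') w) := by
  have := FS_eq (fun a : Ltr => (tr t s a : ℤ) - tr t' s' a) 0 1 3 (by
    intro a
    have := tr_le t s a
    have := tr_le t' s' a
    rw [abs_le]; constructor <;> push_cast <;> omega) (by simp)
  refine (congrArg (FS 9) ?_).mp this
  funext u
  rw [zval_sub, zval_cast, zval_cast]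
  apply propext
  omega

theorem FS_wf (s : ℕ) :
    FS 5 (fun w : List Ltr => nval (tr 0 s) w < nval (tr 1 s) w) := by
  have := FS_ge (fun a : Ltr => (tr 1 s a : ℤ) - tr 0 s a) 1 1 5 (by
    intro a
    have := tr_le 0 s a
    have := tr_le 1 s a
    rw [abs_le]; constructor <;> push_cast <;> omega) (by simp)
  refine (congrArg (FS 5) ?_).mp this
  funext u
  rw [zval_sub, zval_cast, zval_cast]
  apply propext
  omega

theorem FS_forall (k : ℕ) (p : ℕ → List Ltr → Prop) (m : ℕ) (h : ∀ s, FS m (p s)) :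
    FS (m ^ k) (fun w => ∀ s < k, p s w) := by
  induction k with
  | zero =>
    exact FS.mk' (Q := Unit) (fun _ => ()) (fun _ _ => ()) (fun _ => True) (by simp)
      (fun _ _ => rfl) (fun u => by simp)
  | succ k ih =>
    rw [pow_succ]
    refine (congrArg (FS _) ?_).mp (ih.and (h k))
    funext w
    apply propext
    constructor
    · rintro ⟨h1, h2⟩ s hs
      rcases Nat.lt_succ_iff_lt_or_eq.1 hs with h | rfl
      · exact h1 s h
      · exact h2
    · intro h
      exact ⟨fun s hs => h s (by omega), h k (by omega)⟩

theorem bS_ge (n c : ℕ) (h : c ≤ (n + 6) * (n + 6)) : 2 ^ c ≤ bS n :=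
  Nat.pow_le_pow_right (by norm_num) h

theorem bS_81 (n : ℕ) : 81 ≤ bS n := by
  have := bS_ge n 36 (by nlinarith)
  omega

theorem lin_bound (c : List ℤ) (b : ℤ) :
    ∑ i ∈ Finset.range c.length, (c.getD i 0).natAbs ≤
      Encodable.encode (c, b) * Encodable.encode (c, b) ∧ b.natAbs ≤ Encodable.encode (c, b) := by
  rw [Encodable.encode_prod_val]
  have h1 := Nat.left_le_pair (Encodable.encode c) (Encodable.encode b)
  have h2 := Nat.right_le_pair (Encodable.encode c) (Encodable.encode b)
  refine ⟨?_, (encode_int_bound b).trans h2⟩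
  have h3 : ∀ i ∈ Finset.range c.length, (c.getD i 0).natAbs ≤ Encodable.encode c := by
    intro i hi
    rw [Finset.mem_range] at hi
    rw [List.getD_eq_getElem _ _ hi]
    exact (encode_int_bound _).trans ((mem_le_encode c).2 _ (List.getElem_mem hi))
  refine (Finset.sum_le_card_nsmul _ _ _ h3).trans ?_
  rw [Finset.card_range, smul_eq_mul]
  exact Nat.mul_le_mul (((mem_le_encode c).1).trans h1) h1

theorem bS_and (a b t : ℕ) (ht : 6 ≤ t) : bS a * bS b ≤ bS (Nat.pair t (Nat.pair a b)) := by
  have h1 := Nat.add_le_pair t (Nat.pair a b)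
  have h2 := Nat.add_le_pair a b
  unfold bS
  rw [← pow_add]
  apply Nat.pow_le_pow_right (by norm_num)
  calc (a + 6) * (a + 6) + (b + 6) * (b + 6) ≤ (a + b + 12) * (a + b + 12) := by nlinarith
    _ ≤ _ := Nat.mul_le_mul (by omega) (by omega)

theorem fml_FS (φ : TFml) : ∃ p : List Ltr → Prop, FS (bS φ.enc) p ∧
    ∀ w, (∀ s ≤ φ.enc, WF s w) →
      (p w ↔ φ.Sat (fun s => strOf s w) (fun s => nval (tr 3 s) w)) := by
  induction φ with
  | reg D s =>
    refine ⟨_, (FS_reg D s).mono ?_, fun w _ => Iff.rfl⟩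
    set n := (TFml.reg D s).enc with hn
    have h1 : D.enc ≤ n := by
      rw [hn]; simp only [TFml.enc]
      exact (Nat.left_le_pair _ _).trans (Nat.right_le_pair _ _)
    have h2 : D.enc + 1 ≤ 2 ^ D.enc := Nat.lt_two_pow_self
    calc 2 * (D.enc + 1) ^ (D.enc + 1) ≤ 2 * (2 ^ D.enc) ^ (D.enc + 1) := by gcongr
      _ = 2 ^ (D.enc * (D.enc + 1) + 1) := by rw [← pow_mul, pow_succ]; ring
      _ ≤ bS n := bS_ge _ _ (by nlinarith)
  | eq s t =>
    refine ⟨_, ((FS_tr_eq 0 s 0 t).and (FS_tr_eq 2 s 2 t)).mono (bS_81 _), fun w hw => ?_⟩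
    have hs := hw s ((Nat.left_le_pair _ _).trans (Nat.right_le_pair _ _))
    have ht := hw t ((Nat.right_le_pair _ _).trans (Nat.right_le_pair _ _))
    simp only [TFml.Sat]
    rw [← hs.val, ← ht.val, ← hs.len, ← ht.len]
    exact ⟨fun h => strVal_inj _ _ h.2 h.1, fun h => by rw [h]; simp⟩
  | ne s t =>
    refine ⟨_, (((FS_tr_eq 0 s 0 t).and (FS_tr_eq 2 s 2 t)).comp Not).mono (bS_81 _),
      fun w hw => ?_⟩
    have hs := hw s ((Nat.left_le_pair _ _).trans (Nat.right_le_pair _ _))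
    have ht := hw t ((Nat.right_le_pair _ _).trans (Nat.right_le_pair _ _))
    simp only [TFml.Sat]
    rw [← hs.val, ← ht.val, ← hs.len, ← ht.len]
    exact not_congr ⟨fun h => strVal_inj _ _ h.2 h.1, fun h => by rw [h]; simp⟩
  | len s x =>
    refine ⟨_, (FS_tr_eq 2 s 3 x).mono (le_trans (by norm_num) (bS_81 _)), fun w hw => ?_⟩
    have hs := hw s ((Nat.left_le_pair _ _).trans (Nat.right_le_pair _ _))
    simp only [TFml.Sat]
    rw [hs.len]
  | num s x =>
    refine ⟨_, (FS_tr_eq 0 s 3 x).mono (le_trans (by norm_num) (bS_81 _)), fun w hw => ?_⟩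
    have hs := hw s ((Nat.left_le_pair _ _).trans (Nat.right_le_pair _ _))
    simp only [TFml.Sat]
    rw [hs.val]
  | lin c b =>
    obtain ⟨h1, h2⟩ := lin_bound c b
    have hn : Encodable.encode (c, b) ≤ (TFml.lin c b).enc := Nat.right_le_pair _ _
    set n := (TFml.lin c b).enc
    set N := Encodable.encode (c, b)
    refine ⟨_, FS_ge (fun a : Ltr => ∑ i ∈ Finset.range c.length, c.getD i 0 * (tr 3 i a : ℤ)) b
      (N * N) _ ?_ ?_, fun w _ => ?_⟩
    · intro a
      refine (Finset.abs_sum_le_sum_abs _ _).trans ?_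
      calc ∑ i ∈ Finset.range c.length, |c.getD i 0 * (tr 3 i a : ℤ)|
          ≤ ∑ i ∈ Finset.range c.length, ((c.getD i 0).natAbs : ℤ) := by
            apply Finset.sum_le_sum
            intro i _
            rw [abs_mul, Int.natCast_natAbs]
            have h3 := tr_le 3 i a
            have h4 : |(tr 3 i a : ℤ)| ≤ 1 := by rw [abs_le]; constructor <;> omega
            exact mul_le_of_le_one_right (abs_nonneg _) h4
        _ ≤ _ := by exact_mod_cast h1
    · have h3 : N < 2 ^ N := Nat.lt_two_pow_self
      calc 2 * (N * N + b.natAbs) + 1 ≤ 2 * ((N + 1) * (N + 1)) := by nlinarith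
        _ ≤ 2 * (2 ^ N * 2 ^ N) := by gcongr <;> omega
        _ = 2 ^ (N + N + 1) := by rw [pow_succ, pow_add]; ring
        _ ≤ _ := bS_ge _ _ (by nlinarith)
    · simp only [TFml.Sat, zval_sum, zval_mul, zval_cast]
  | and φ ψ ih1 ih2 =>
    obtain ⟨p1, hp1, h1⟩ := ih1
    obtain ⟨p2, hp2, h2⟩ := ih2
    refine ⟨_, (hp1.and hp2).mono (bS_and _ _ 6 le_rfl), fun w hw => ?_⟩
    have e1 := h1 w fun s hs => hw s (hs.trans ((Nat.left_le_pair _ _).trans (Nat.right_le_pair _ _)))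
    have e2 := h2 w fun s hs => hw s (hs.trans ((Nat.right_le_pair _ _).trans (Nat.right_le_pair _ _)))
    simp only [TFml.Sat, e1, e2]
  | or φ ψ ih1 ih2 =>
    obtain ⟨p1, hp1, h1⟩ := ih1
    obtain ⟨p2, hp2, h2⟩ := ih2
    refine ⟨_, (hp1.or hp2).mono (bS_and _ _ 7 (by norm_num)), fun w hw => ?_⟩
    have e1 := h1 w fun s hs => hw s (hs.trans ((Nat.left_le_pair _ _).trans (Nat.right_le_pair _ _)))
    have e2 := h2 w fun s hs => hw s (hs.trans ((Nat.right_le_pair _ _).trans (Nat.right_le_pair _ _)))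
    simp only [TFml.Sat, e1, e2]

theorem Sat_congr (φ : TFml) (I I' : ℕ → List Bool) (ν ν' : ℕ → ℕ)
    (h : ∀ s ≤ φ.enc, I s = I' s ∧ ν s = ν' s) : φ.Sat I ν ↔ φ.Sat I' ν' := by
  have hl : ∀ t a b : ℕ, a ≤ Nat.pair t (Nat.pair a b) := fun t a b =>
    (Nat.left_le_pair _ _).trans (Nat.right_le_pair _ _)
  have hr : ∀ t a b : ℕ, b ≤ Nat.pair t (Nat.pair a b) := fun t a b =>
    (Nat.right_le_pair _ _).trans (Nat.right_le_pair _ _)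
  induction φ with
  | reg D s => simp only [TFml.Sat, (h s (hr _ _ _)).1]
  | eq s t => simp only [TFml.Sat, (h s (hl _ _ _)).1, (h t (hr _ _ _)).1]
  | ne s t => simp only [TFml.Sat, (h s (hl _ _ _)).1, (h t (hr _ _ _)).1]
  | len s t => simp only [TFml.Sat, (h s (hl _ _ _)).1, (h t (hr _ _ _)).2]
  | num s t => simp only [TFml.Sat, (h s (hl _ _ _)).1, (h t (hr _ _ _)).2]
  | lin c b =>
    simp only [TFml.Sat]
    have : ∀ i ∈ Finset.range c.length, c.getD i 0 * (ν i : ℤ) = c.getD i 0 * (ν' i : ℤ) := by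
      intro i hi
      rw [Finset.mem_range] at hi
      have h1 : i ≤ (TFml.lin c b).enc := by
        have h2 := (mem_le_encode c).1
        have h3 : Encodable.encode c ≤ (TFml.lin c b).enc := hl 5 _ _
        omega
      rw [(h i h1).2]
    rw [Finset.sum_congr rfl this]
  | and φ ψ ih1 ih2 =>
    simp only [TFml.Sat]
    have e1 := ih1 fun s hs => h s (hs.trans (hl _ _ _))
    have e2 := ih2 fun s hs => h s (hs.trans (hr _ _ _))
    exact and_congr e1 e2
  | or φ ψ ih1 ih2 =>
    simp only [TFml.Sat]
    have e1 := ih1 fun s hs => h s (hs.trans (hl _ _ _))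
    have e2 := ih2 fun s hs => h s (hs.trans (hr _ _ _))
    exact or_congr e1 e2

/-- the numbers on the tracks -/
def trNum (I : ℕ → List Bool) (ν : ℕ → ℕ) : ℕ → ℕ → ℕ
  | 0, s => strVal (I s)
  | 1, s => 2 ^ (I s).length
  | 2, s => (I s).length
  | _, s => ν s

/-- the word coding an assignment -/
def mkW (num : ℕ → ℕ → ℕ) (N : ℕ) : List Ltr :=
  (List.range N).map fun p => fun t s => (num t s).testBit p

theorem nval_mkW (num : ℕ → ℕ → ℕ) (N t s : ℕ) :
    nval (tr t s) (mkW num N) = num t s % 2 ^ N := by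
  induction N with
  | zero => simp [mkW, nval, Nat.mod_one]
  | succ N ih =>
    have : mkW num (N + 1) = mkW num N ++ [fun t s => (num t s).testBit N] := by
      simp [mkW, List.range_succ]
    rw [this, nval_append, ih, Nat.mod_pow_succ]
    simp [nval, tr, mkW, Nat.toNat_testBit]

theorem strVal_lt (l : List Bool) : strVal l < 2 ^ l.length := by
  induction l using List.reverseRecOn with
  | nil => simp [strVal]
  | append_singleton l b ih =>
    have := b.toNat_le
    rw [strVal_append, List.length_append, List.length_singleton, pow_succ]
    omega

/-- bound on the length of the word -/
def bW (n : ℕ) : ℕ := bF (n + 1) (bS n * 5 ^ (n + 1))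

theorem small_model (φ : TFml) (I : ℕ → List Bool) (ν : ℕ → ℕ) (hsat : φ.Sat I ν) :
    ∃ (I' : ℕ → List Bool) (ν' : ℕ → ℕ), φ.Sat I' ν' ∧
      ∀ s, (I' s).length ≤ bW φ.enc ∧ ν' s < 2 ^ bW φ.enc := by
  obtain ⟨p, hp, hpw⟩ := fml_FS φ
  set n := φ.enc with hn
  have hF := hp.and (FS_forall (n + 1) _ 5 FS_wf)
  obtain ⟨N, hN⟩ : ∃ N, ∀ s ≤ n, ∀ t < 4, trNum I ν t s < 2 ^ N := by
    refine ⟨∑ s ∈ Finset.range (n + 1), ∑ t ∈ Finset.range 4, trNum I ν t s, ?_⟩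
    intro s hs t ht
    refine lt_of_le_of_lt ?_ Nat.lt_two_pow_self
    refine le_trans ?_ (Finset.single_le_sum (f := fun s => ∑ t ∈ Finset.range 4, trNum I ν t s)
      (fun _ _ => Nat.zero_le _) (Finset.mem_range.2 (Nat.lt_succ_of_le hs)))
    exact Finset.single_le_sum (f := fun t => trNum I ν t s)
      (fun _ _ => Nat.zero_le _) (Finset.mem_range.2 ht)
  set w := mkW (trNum I ν) N with hw
  have hval : ∀ s ≤ n, ∀ t < 4, nval (tr t s) w = trNum I ν t s := by
    intro s hs t ht
    rw [hw, nval_mkW, Nat.mod_eq_of_lt (hN s hs t ht)]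
  have hWF : ∀ s ≤ n, WF s w := by
    intro s hs
    unfold WF
    rw [hval s hs 0 (by norm_num), hval s hs 1 (by norm_num), hval s hs 2 (by norm_num)]
    exact ⟨rfl, strVal_lt _⟩
  have hpw0 : p w := by
    rw [hpw w hWF]
    refine (Sat_congr φ _ _ _ _ ?_).1 hsat
    intro s hs
    refine ⟨?_, (hval s hs 3 (by norm_num)).symm⟩
    apply strVal_inj
    · rw [(hWF s hs).len, hval s hs 2 (by norm_num)]; rfl
    · rw [(hWF s hs).val, hval s hs 0 (by norm_num)]; rfl
  obtain ⟨w', ⟨h1, h2⟩, h3, h4⟩ := core (tr 2) (tr 1) (fun i a => tr_le _ _ _)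
    (fun i a => tr_le _ _ _) (n + 1) _ (Finset.range (n + 1)) (by simp) _ hF w
    ⟨hpw0, fun s hs => (hWF s (by omega)).2⟩
    (fun s hs => (hWF s (by rw [Finset.mem_range] at hs; omega)).1)
  refine ⟨fun s => strOf s w', fun s => nval (tr 3 s) w', ?_, ?_⟩
  · rw [← hpw w']
    · exact h1
    · intro s hs
      exact ⟨h3 s (Finset.mem_range.2 (by omega)), h2 s (by omega)⟩
  · intro s
    refine ⟨(strOf_len_le s w').trans h4, (nval_lt _ (tr_le 3 s) w').trans_le ?_⟩
    exact Nat.pow_le_pow_right (by norm_num) h4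

/-! ### Computability of the bounds -/

theorem pr_pow : Primrec₂ (fun a b : ℕ => a ^ b) := Primrec₂.unpaired'.1 Nat.Primrec.pow

theorem pr_fact : Primrec Nat.factorial := by
  have : Primrec (fun n : ℕ => (Nat.rec 1 (fun i acc => (i + 1) * acc) n : ℕ)) :=
    Primrec.nat_rec₁ 1 (Primrec.nat_mul.comp (Primrec.succ.comp Primrec.fst) Primrec.snd)
  refine this.of_eq fun n => ?_
  induction n with
  | zero => rfl
  | succ n ih => rw [Nat.factorial_succ, ← ih]

theorem pr_two_pow {α : Type} [Primcodable α] {f : α → ℕ} (hf : Primrec f) :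
    Primrec (fun a => 2 ^ f a) := pr_pow.comp (Primrec.const 2) hf

theorem pr_add {α : Type} [Primcodable α] {f g : α → ℕ} (hf : Primrec f) (hg : Primrec g) :
    Primrec (fun a => f a + g a) := Primrec.nat_add.comp hf hg

theorem pr_mul {α : Type} [Primcodable α] {f g : α → ℕ} (hf : Primrec f) (hg : Primrec g) :
    Primrec (fun a => f a * g a) := Primrec.nat_mul.comp hf hg

theorem pr_bH : Primrec bH := by
  have h2 : Primrec (fun M : ℕ => 2 ^ M) := pr_two_pow Primrec.id
  have hf : Primrec (fun M : ℕ => (2 ^ M).factorial) := pr_fact.comp h2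
  exact pr_mul (pr_mul Primrec.id (pr_mul hf (pr_mul hf hf)))
    (pr_pow.comp (pr_two_pow (pr_add h2 (Primrec.const 6))) (Primrec.const 4))

theorem pr_bR : Primrec bR := by
  have h2 : Primrec (fun M : ℕ => 2 ^ M) := pr_two_pow Primrec.id
  have hf : Primrec (fun M : ℕ => (2 ^ M).factorial) := pr_fact.comp h2
  exact pr_add (pr_add (pr_add (pr_two_pow (pr_add h2 (Primrec.const 3))) (Primrec.const 2)) h2) hf

theorem bF_rec (n M : ℕ) : ∀ i ≤ n, bF i (bH^[n - i] M) =
    Nat.rec (bR (bH^[n] M)) (fun i acc => 2 ^ acc + bR (bH^[n - (i + 1)] M)) i := by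
  intro i
  induction i with
  | zero => intro _; rfl
  | succ i ih =>
    intro h
    have := ih (by omega)
    simp only [bF]
    rw [← this, ← Function.iterate_succ_apply' bH, show (n - (i + 1)).succ = n - i by omega]

theorem pr_bF : Primrec₂ bF := by
  have hit : ∀ {α : Type} [Primcodable α] {f g : α → ℕ}, Primrec f → Primrec g →
      Primrec (fun a => bH^[f a] (g a)) := fun hf hg =>
    Primrec.nat_iterate hf hg (pr_bH.comp Primrec.snd)
  have : Primrec (fun p : ℕ × ℕ => (Nat.rec (bR (bH^[p.1] p.2))
      (fun i acc => 2 ^ acc + bR (bH^[p.1 - (i + 1)] p.2)) p.1 : ℕ)) := by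
    refine Primrec.nat_rec' (h := fun (p : ℕ × ℕ) (q : ℕ × ℕ) =>
      2 ^ q.2 + bR (bH^[p.1 - (q.1 + 1)] p.2)) Primrec.fst
      (pr_bR.comp (hit Primrec.fst Primrec.snd)) ?_
    refine pr_add (pr_two_pow (Primrec.snd.comp Primrec.snd)) (pr_bR.comp (hit ?_ ?_))
    · exact Primrec.nat_sub.comp (Primrec.fst.comp Primrec.fst)
        (Primrec.succ.comp (Primrec.fst.comp Primrec.snd))
    · exact Primrec.snd.comp Primrec.fst
  refine this.of_eq fun p => ?_
  have := bF_rec p.1 p.2 p.1 le_rfl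
  rw [← this]; simp

theorem pr_bW : Primrec bW := by
  have h6 : Primrec (fun n : ℕ => n + 6) := pr_add Primrec.id (Primrec.const 6)
  exact pr_bF.comp Primrec.succ (pr_mul (pr_two_pow (pr_mul h6 h6))
    (pr_pow.comp (Primrec.const 5) Primrec.succ))

/-- a bound for codes of lists -/
def lB (B K : ℕ) : ℕ := (fun e => (B + e + 1) * (B + e + 1) + 1)^[K] 0

theorem lB_succ (B K : ℕ) : lB B (K + 1) = (B + lB B K + 1) * (B + lB B K + 1) + 1 :=
  Function.iterate_succ_apply' _ _ _

theorem lB_mono (B : ℕ) : Monotone (lB B) := by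
  refine monotone_nat_of_le_succ fun K => ?_
  rw [lB_succ]; nlinarith

theorem pr_lB : Primrec₂ lB := by
  have : Primrec₂ (fun (p : ℕ × ℕ) (e : ℕ) => (p.1 + e + 1) * (p.1 + e + 1) + 1) := by
    have h : Primrec (fun q : (ℕ × ℕ) × ℕ => q.1.1 + q.2 + 1) :=
      pr_add (pr_add (Primrec.fst.comp Primrec.fst) Primrec.snd) (Primrec.const 1)
    exact pr_add (pr_mul h h) (Primrec.const 1)
  exact Primrec.nat_iterate Primrec.snd (Primrec.const 0) this

theorem pair_le (a b : ℕ) : Nat.pair a b ≤ (a + b + 1) * (a + b + 1) := by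
  have h := Nat.pair_lt_max_add_one_sq a b
  have h2 : max a b + 1 ≤ a + b + 1 := by omega
  have h3 := Nat.mul_le_mul h2 h2
  rw [sq] at h
  omega

theorem encode_list_le {β : Type} [Encodable β] (B : ℕ) (l : List β)
    (h : ∀ a ∈ l, Encodable.encode a ≤ B) : Encodable.encode l ≤ lB B l.length := by
  induction l with
  | nil => simp
  | cons a l ih =>
    rw [Encodable.encode_list_cons, List.length_cons, lB_succ]
    have h1 := h a (by simp)
    have h2 := ih (fun b hb => h b (by simp [hb]))
    have h3 := pair_le (Encodable.encode a) (Encodable.encode l)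
    have h4 : Encodable.encode a + Encodable.encode l + 1 ≤ B + lB B l.length + 1 := by omega
    have := Nat.mul_le_mul h4 h4
    simp only [Nat.succ_eq_add_one]
    omega

/-- the bound for certificates -/
def cB (n : ℕ) : ℕ :=
  (lB (lB 1 (bW n)) (n + 1) + lB (2 ^ bW n) (n + 1) + 1) *
    (lB (lB 1 (bW n)) (n + 1) + lB (2 ^ bW n) (n + 1) + 1)

theorem pr_cB : Primrec cB := by
  have h : Primrec (fun n => lB (lB 1 (bW n)) (n + 1) + lB (2 ^ bW n) (n + 1) + 1) :=
    pr_add (pr_add (pr_lB.comp (pr_lB.comp (Primrec.const 1) pr_bW) Primrec.succ)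
      (pr_lB.comp (pr_two_pow pr_bW) Primrec.succ)) (Primrec.const 1)
  exact pr_mul h h

/-- certificates -/
abbrev Cert : Type := List (List Bool) × List ℕ

theorem cert_le (n : ℕ) (I : ℕ → List Bool) (ν : ℕ → ℕ)
    (h : ∀ s, (I s).length ≤ bW n ∧ ν s < 2 ^ bW n) :
    Encodable.encode (((List.range (n + 1)).map I, (List.range (n + 1)).map ν) : Cert) ≤ cB n := by
  rw [Encodable.encode_prod_val]
  refine (pair_le _ _).trans ?_
  have h1 : Encodable.encode ((List.range (n + 1)).map I) ≤ lB (lB 1 (bW n)) (n + 1) := by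
    have := encode_list_le (lB 1 (bW n)) ((List.range (n + 1)).map I) (by
      intro l hl
      obtain ⟨s, -, rfl⟩ := List.mem_map.1 hl
      refine (encode_list_le 1 (I s) ?_).trans (lB_mono 1 (h s).1)
      intro b _
      cases b <;> simp)
    simpa using this
  have h2 : Encodable.encode ((List.range (n + 1)).map ν) ≤ lB (2 ^ bW n) (n + 1) := by
    have := encode_list_le (2 ^ bW n) ((List.range (n + 1)).map ν) (by
      intro l hl
      obtain ⟨s, -, rfl⟩ := List.mem_map.1 hl
      exact (h s).2.le)
    simpa using this
  exact Nat.mul_le_mul (by omega) (by omega)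

/-! ### The evaluator -/

/-- positive part of the integer with a given code -/
def zpos (n : ℕ) : ℕ := if n % 2 = 0 then n / 2 else 0

/-- negative part of the integer with a given code -/
def zneg (n : ℕ) : ℕ := if n % 2 = 0 then 0 else n / 2 + 1

theorem pr_zpos : Primrec zpos :=
  Primrec.ite (Primrec.eq.comp (Primrec.nat_mod.comp Primrec.id (Primrec.const 2))
    (Primrec.const 0)) (Primrec.nat_div.comp Primrec.id (Primrec.const 2)) (Primrec.const 0)

theorem pr_zneg : Primrec zneg :=
  Primrec.ite (Primrec.eq.comp (Primrec.nat_mod.comp Primrec.id (Primrec.const 2))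
    (Primrec.const 0)) (Primrec.const 0)
    (pr_add (Primrec.nat_div.comp Primrec.id (Primrec.const 2)) (Primrec.const 1))

theorem zpos_zneg (z : ℤ) :
    z = (zpos (Encodable.encode z) : ℤ) - zneg (Encodable.encode z) := by
  rcases z with n | n
  · have : Encodable.encode (Int.ofNat n) = 2 * n := rfl
    rw [this]
    simp [zpos, zneg]
  · have : Encodable.encode (Int.negSucc n) = 2 * n + 1 := rfl
    rw [this]
    have h1 : (2 * n + 1) % 2 = 1 := by omega
    have h2 : (2 * n + 1) / 2 = n := by omega
    simp only [zpos, zneg, h1, h2]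
    simp
    omega

theorem encode_map_encode {β : Type} [Encodable β] (l : List β) :
    Encodable.encode (l.map Encodable.encode) = Encodable.encode l := by
  induction l with
  | nil => rfl
  | cons a l ih =>
    rw [List.map_cons, Encodable.encode_list_cons, Encodable.encode_list_cons, ih]; rfl

/-- weighted sum -/
def wsum (f : ℕ → ℕ) (l v : List ℕ) : ℕ :=
  (List.range l.length).foldl (fun acc i => acc + f (l.getD i 0) * v.getD i 0) 0

theorem wsum_eq (f : ℕ → ℕ) (l v : List ℕ) :
    wsum f l v = ∑ i ∈ Finset.range l.length, f (l.getD i 0) * v.getD i 0 := by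
  unfold wsum
  induction l.length with
  | zero => rfl
  | succ n ih => rw [List.range_succ, List.foldl_append, ih, Finset.sum_range_succ]; rfl

theorem pr_wsum {f : ℕ → ℕ} (hf : Primrec f) : Primrec₂ (wsum f) := by
  refine Primrec.list_foldl (h := fun (p : List ℕ × List ℕ) (q : ℕ × ℕ) =>
    q.1 + f (p.1.getD q.2 0) * p.2.getD q.2 0)
    (Primrec.list_range.comp (Primrec.list_length.comp Primrec.fst)) (Primrec.const 0) ?_
  refine pr_add (Primrec.fst.comp Primrec.snd) (pr_mul (hf.comp ?_) ?_)
  · exact (Primrec.list_getD 0).comp (Primrec.fst.comp Primrec.fst) (Primrec.snd.comp Primrec.snd)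
  · exact (Primrec.list_getD 0).comp (Primrec.snd.comp Primrec.fst) (Primrec.snd.comp Primrec.snd)

theorem pr_toNat : Primrec Bool.toNat := by
  refine (Primrec.cond Primrec.id (Primrec.const 1) (Primrec.const 0)).of_eq fun b => ?_
  cases b <;> rfl

theorem pr_strVal : Primrec strVal := by
  refine Primrec.list_foldl (h := fun (_ : List Bool) (q : ℕ × Bool) => 2 * q.1 + q.2.toNat)
    Primrec.id (Primrec.const 0) ?_
  exact pr_add (pr_mul (Primrec.const 2) (Primrec.fst.comp Primrec.snd))
    (pr_toNat.comp (Primrec.snd.comp Primrec.snd))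

/-- data of an automaton -/
abbrev DD : Type := ℕ × List ℕ × ℕ × List ℕ

/-- decoding of an automaton -/
def toDD (a : ℕ) : DD := (Encodable.decode (α := DD) a).getD (0, [], 0, [])

theorem pr_toDD : Primrec toDD :=
  Primrec.option_getD.comp Primrec.decode (Primrec.const _)

/-- running an automaton -/
def runDD (D : DD) (w : List Bool) : ℕ :=
  w.foldl (fun q b => D.2.1.getD (2 * q + b.toNat) 0) D.2.2.1

theorem pr_runDD : Primrec₂ runDD := by
  refine Primrec.list_foldl (h := fun (p : DD × List Bool) (q : ℕ × Bool) =>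
    p.1.2.1.getD (2 * q.1 + q.2.toNat) 0) Primrec.snd ?_ ?_
  · exact Primrec.fst.comp (Primrec.snd.comp (Primrec.snd.comp Primrec.fst))
  · refine (Primrec.list_getD 0).comp ?_ ?_
    · exact Primrec.fst.comp (Primrec.snd.comp (Primrec.fst.comp Primrec.fst))
    · exact pr_add (pr_mul (Primrec.const 2) (Primrec.fst.comp Primrec.snd))
        (pr_toNat.comp (Primrec.snd.comp Primrec.snd))

/-- the string of a variable -/
def cI (c : Cert) (s : ℕ) : List Bool := c.1.getD s []

/-- the number of a variable -/
def cN (c : Cert) (s : ℕ) : ℕ := c.2.getD s 0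

theorem pr_cI : Primrec₂ cI := (Primrec.list_getD []).comp (Primrec.fst.comp Primrec.fst) Primrec.snd

theorem pr_cN : Primrec₂ cN := (Primrec.list_getD 0).comp (Primrec.snd.comp Primrec.fst) Primrec.snd

/-- decoding of coefficient lists -/
def toLN (a : ℕ) : List ℕ := (Encodable.decode (α := List ℕ) a).getD []

theorem pr_toLN : Primrec toLN :=
  Primrec.option_getD.comp Primrec.decode (Primrec.const _)

/-- one evaluation step -/
def evG (c : Cert) (L : List Bool) (t a b : ℕ) : Prop :=
  (t = 0 ∧ ∃ q ∈ (toDD a).2.2.2, q = runDD (toDD a) (cI c b)) ∨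
  (t = 1 ∧ cI c a = cI c b) ∨
  (t = 2 ∧ ¬ cI c a = cI c b) ∨
  (t = 3 ∧ (cI c a).length = cN c b) ∨
  (t = 4 ∧ strVal (cI c a) = cN c b) ∨
  (t = 5 ∧ zpos b + wsum zneg (toLN a) c.2 ≤ zneg b + wsum zpos (toLN a) c.2) ∨
  (t = 6 ∧ (L.getD a false = true ∧ L.getD b false = true)) ∨
  (t = 7 ∧ (L.getD a false = true ∨ L.getD b false = true))

theorem pr_evG {α : Type} [Primcodable α] {c : α → Cert} {L : α → List Bool} {t a b : α → ℕ}
    (hc : Primrec c) (hL : Primrec L) (ht : Primrec t) (ha : Primrec a) (hb : Primrec b) :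
    PrimrecPred (fun x => evG (c x) (L x) (t x) (a x) (b x)) := by
  have T : ∀ k, PrimrecPred (fun x => t x = k) := fun k => Primrec.eq.comp ht (Primrec.const k)
  have Ia : Primrec (fun x => cI (c x) (a x)) := pr_cI.comp hc ha
  have Ib : Primrec (fun x => cI (c x) (b x)) := pr_cI.comp hc hb
  have Nb : Primrec (fun x => cN (c x) (b x)) := pr_cN.comp hc hb
  have D : Primrec (fun x => toDD (a x)) := pr_toDD.comp ha
  have l : Primrec (fun x => toLN (a x)) := pr_toLN.comp ha
  have c2 : Primrec (fun x => (c x).2) := Primrec.snd.comp hc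
  have La : PrimrecPred (fun x => (L x).getD (a x) false = true) :=
    Primrec.eq.comp ((Primrec.list_getD false).comp hL ha) (Primrec.const true)
  have Lb : PrimrecPred (fun x => (L x).getD (b x) false = true) :=
    Primrec.eq.comp ((Primrec.list_getD false).comp hL hb) (Primrec.const true)
  have R : PrimrecRel (fun (L : List ℕ) (b : ℕ) => ∃ q ∈ L, q = b) :=
    PrimrecRel.exists_mem_list Primrec.eq
  refine ((T 0).and ?_).or (((T 1).and (Primrec.eq.comp Ia Ib)).or (((T 2).and
    (Primrec.eq.comp Ia Ib).not).or (((T 3).and (Primrec.eq.comp (Primrec.list_length.comp Ia)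
    Nb)).or (((T 4).and (Primrec.eq.comp (pr_strVal.comp Ia) Nb)).or (((T 5).and ?_).or
    (((T 6).and (La.and Lb)).or ((T 7).and (La.or Lb))))))))
  · exact R.comp (Primrec.snd.comp (Primrec.snd.comp (Primrec.snd.comp D))) (pr_runDD.comp D Ib)
  · exact Primrec.nat_le.comp (pr_add (pr_zpos.comp hb) ((pr_wsum pr_zneg).comp l c2))
      (pr_add (pr_zneg.comp hb) ((pr_wsum pr_zpos).comp l c2))

open Classical in
/-- evaluation step, boolean version -/
noncomputable def evB (c : Cert) (L : List Bool) : Bool :=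
  decide (evG c L L.length.unpair.1 L.length.unpair.2.unpair.1 L.length.unpair.2.unpair.2)

open Classical in
theorem pr_evB : Primrec₂ evB := by
  have hn : Primrec (fun p : Cert × List Bool => p.2.length.unpair) :=
    Primrec.unpair.comp (Primrec.list_length.comp Primrec.snd)
  have h2 : Primrec (fun p : Cert × List Bool => p.2.length.unpair.2.unpair) :=
    Primrec.unpair.comp (Primrec.snd.comp hn)
  exact (pr_evG Primrec.fst Primrec.snd (Primrec.fst.comp hn) (Primrec.fst.comp h2)
    (Primrec.snd.comp h2)).decide

/-- values of all formulas with smaller codes -/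
noncomputable def hist (c : Cert) (n : ℕ) : List Bool :=
  Nat.rec [] (fun _ L => L ++ [evB c L]) n

theorem pr_hist : Primrec₂ hist := by
  refine Primrec.nat_rec (f := fun _ : Cert => ([] : List Bool))
    (g := fun (c : Cert) (q : ℕ × List Bool) => q.2 ++ [evB c q.2]) (Primrec.const _) ?_
  exact Primrec.list_concat.comp (Primrec.snd.comp Primrec.snd)
    (pr_evB.comp Primrec.fst (Primrec.snd.comp Primrec.snd))

theorem hist_length (c : Cert) (n : ℕ) : (hist c n).length = n := by
  induction n with
  | zero => rfl
  | succ n ih =>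
    have : hist c (n + 1) = hist c n ++ [evB c (hist c n)] := rfl
    rw [this, List.length_append, ih]; rfl

theorem hist_getD (c : Cert) (n i : ℕ) (h : i < n) :
    (hist c n).getD i false = evB c (hist c i) := by
  induction n with
  | zero => omega
  | succ n ih =>
    have : hist c (n + 1) = hist c n ++ [evB c (hist c n)] := rfl
    rw [this]
    rcases Nat.lt_succ_iff_lt_or_eq.1 h with h | rfl
    · rw [List.getD_append _ _ _ _ (by rw [hist_length]; exact h), ih h]
    · rw [List.getD_append_right _ _ _ _ (by rw [hist_length]), hist_length]
      simp

theorem ev_pair (c : Cert) (t a b : ℕ) :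
    evB c (hist c (Nat.pair t (Nat.pair a b))) = true ↔
      evG c (hist c (Nat.pair t (Nat.pair a b))) t a b := by
  unfold evB
  rw [hist_length]
  simp

theorem ev_spec (c : Cert) (φ : TFml) :
    evB c (hist c φ.enc) = true ↔ φ.Sat (cI c) (cN c) := by
  have hlt : ∀ t a b : ℕ, 1 ≤ t → a < Nat.pair t (Nat.pair a b) ∧ b < Nat.pair t (Nat.pair a b) := by
    intro t a b ht
    have h1 := Nat.add_le_pair t (Nat.pair a b)
    have h2 := Nat.add_le_pair a b
    omega
  induction φ with
  | reg D s =>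
    have hD : toDD D.enc = (D.states, D.trans, D.start, D.accept) := by
      unfold toDD RawDFA2.enc
      rw [Encodable.encodek]; rfl
    refine (ev_pair c _ _ _).trans ?_
    simp only [evG, hD, TFml.Sat, RawDFA2.Accepts]
    simp
    rfl
  | eq s t => refine (ev_pair c _ _ _).trans ?_; simp [evG, TFml.Sat]
  | ne s t => refine (ev_pair c _ _ _).trans ?_; simp [evG, TFml.Sat]
  | len s t => refine (ev_pair c _ _ _).trans ?_; simp [evG, TFml.Sat]
  | num s t => refine (ev_pair c _ _ _).trans ?_; simp [evG, TFml.Sat]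
  | lin l b =>
    have hL : toLN (Encodable.encode l) = l.map Encodable.encode := by
      unfold toLN
      rw [← encode_map_encode, Encodable.encodek]; rfl
    refine (ev_pair c 5 (Encodable.encode l) (Encodable.encode b)).trans ?_
    have e1 : ∑ i ∈ Finset.range l.length, l.getD i 0 * (cN c i : ℤ) =
        (wsum zpos (l.map Encodable.encode) c.2 : ℤ) - wsum zneg (l.map Encodable.encode) c.2 := by
      rw [wsum_eq, wsum_eq, List.length_map]
      push_cast
      rw [← Finset.sum_sub_distrib]
      refine Finset.sum_congr rfl fun i _ => ?_
      have : (l.map Encodable.encode).getD i 0 = Encodable.encode (l.getD i 0) := by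
        rw [← List.getD_map (f := Encodable.encode)]
        rfl
      rw [this]
      conv_lhs => rw [zpos_zneg (l.getD i 0)]
      simp only [cN]
      ring
    simp only [evG, hL, TFml.Sat]
    rw [e1]
    have e2 := zpos_zneg b
    simp
    omega
  | and φ ψ ih1 ih2 =>
    refine (ev_pair c _ _ _).trans ?_
    have h := hlt 6 φ.enc ψ.enc (by norm_num)
    simp only [evG, hist_getD c _ _ h.1, hist_getD c _ _ h.2, ih1, ih2, TFml.Sat]
    simp
  | or φ ψ ih1 ih2 =>
    refine (ev_pair c _ _ _).trans ?_
    have h := hlt 7 φ.enc ψ.enc (by norm_num)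
    simp only [evG, hist_getD c _ _ h.1, hist_getD c _ _ h.2, ih1, ih2, TFml.Sat]
    simp

/-- decoding of certificates -/
def toCert (a : ℕ) : Cert := (Encodable.decode (α := Cert) a).getD ([], [])

theorem pr_toCert : Primrec toCert :=
  Primrec.option_getD.comp Primrec.decode (Primrec.const _)

theorem sat_iff (φ : TFml) : (∃ x < cB φ.enc + 1, evB (toCert x) (hist (toCert x) φ.enc) = true) ↔
    ∃ (I : ℕ → List Bool) (ν : ℕ → ℕ), φ.Sat I ν := by
  constructor
  · rintro ⟨x, -, hx⟩
    exact ⟨_, _, (ev_spec _ _).1 hx⟩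
  · rintro ⟨I, ν, h⟩
    obtain ⟨I', ν', h1, h2⟩ := small_model φ I ν h
    refine ⟨_, Nat.lt_succ_of_le (cert_le φ.enc I' ν' h2), ?_⟩
    rw [show toCert (Encodable.encode (((List.range (φ.enc + 1)).map I',
      (List.range (φ.enc + 1)).map ν') : Cert)) = ((List.range (φ.enc + 1)).map I',
      (List.range (φ.enc + 1)).map ν') by unfold toCert; rw [Encodable.encodek]; rfl, ev_spec]
    refine (Sat_congr φ _ _ _ _ fun s hs => ?_).1 h1
    have hsl : s < φ.enc + 1 := by omega
    simp [cI, cN, hsl]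

/-- Satisfiability of quantifier-free formulas of `T_{RE,ln}` is decidable: a computable
function on Gödel encodings returns `true` exactly on the satisfiable formulas. -/
theorem TREln_satisfiability_decidable :
    ∃ f : ℕ → Bool, Computable f ∧
      ∀ φ : TFml, (f φ.enc = true ↔ ∃ (I : ℕ → List Bool) (ν : ℕ → ℕ), φ.Sat I ν) := by

  have hR : PrimrecRel (fun x n : ℕ => evB (toCert x) (hist (toCert x) n) = true) := by
    have hc : Primrec (fun p : ℕ × ℕ => toCert p.1) := pr_toCert.comp Primrec.fst
    exact Primrec.eq.comp (pr_evB.comp hc (pr_hist.comp hc Primrec.snd)) (Primrec.const true)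
  have hP : PrimrecPred (fun n : ℕ => ∃ x < cB n + 1, evB (toCert x) (hist (toCert x) n) = true) :=
    (PrimrecRel.exists_lt hR).comp (Primrec.succ.comp pr_cB) Primrec.id
  classical
  refine ⟨_, hP.decide.to_comp, fun φ => ?_⟩
  rw [decide_eq_true_iff]
  exact sat_iff φ
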